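/- Let H be a distribution function with upper endpoint r_H = ∞ and suppose H ∈ MDA(Λ, w), i.e. there is a positive measurable function w with lim_{x→∞} H̄(x + t/w(x))/H̄(x) = e^{−t} for every t ∈ ℝ. Then for every constant μ ≥ 0 and every c > 1, lim_{x→∞} (x·w(x))^μ · H̄(cx)/H̄(x) = 0. -/

import Mathlib

open MeasureTheory ProbabilityTheory Real Filter Set Topology

noncomputable section

/-- Iterating the one-step bounds. -/
lemma rv_iter (G w : ℝ → ℝ) (hG : Antitone G) (hw : ∀ x, 0 < w x) (q X : ℝ) (hq : 1 < q)
    (h1 : ∀ x, X ≤ x → G (x + 1 / w x) ≤ G x / 2)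
    (h2 : ∀ x, X ≤ x → 1 / w (x + 1 / w x) ≤ q * (1 / w x)) (n : ℕ) :
    ∀ x, X ≤ x → G (x + 1 / w x * ((q ^ n - 1) / (q - 1))) ≤ G x / 2 ^ n := by
  induction n with
  | zero => intro x _; simp
  | succ n ih =>
    intro x hx
    have ha : 0 < 1 / w x := one_div_pos.2 (hw x)
    have hq' : 0 < q - 1 := by linarith
    have hS : 0 ≤ (q ^ n - 1) / (q - 1) :=
      div_nonneg (by have := one_le_pow₀ hq.le (n := n); linarith) hq'.le
    have h3 := ih (x + 1 / w x) (by linarith)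
    have h4 := mul_le_mul_of_nonneg_right (h2 x hx) hS
    have h5 : (q ^ (n + 1) - 1) / (q - 1) = 1 + q * ((q ^ n - 1) / (q - 1)) := by
      field_simp
      ring
    calc G (x + 1 / w x * ((q ^ (n + 1) - 1) / (q - 1)))
        ≤ G (x + 1 / w x + 1 / w (x + 1 / w x) * ((q ^ n - 1) / (q - 1))) := by
          apply hG
          rw [h5]
          linarith
      _ ≤ G (x + 1 / w x) / 2 ^ n := h3
      _ ≤ (G x / 2) / 2 ^ n := by
          have := h1 x hx
          gcongr
      _ = G x / 2 ^ (n + 1) := by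
          rw [pow_succ, div_div, mul_comm]

/-- `x w(x) → ∞`. -/
lemma rv_xw (G w : ℝ → ℝ) (hG : Antitone G) (hpos : ∀ x, 0 < G x) (hw : ∀ x, 0 < w x)
    (h0 : Tendsto G atTop (𝓝 0))
    (hM : ∀ t : ℝ, Tendsto (fun x => G (x + t / w x) / G x) atTop (𝓝 (Real.exp (-t)))) :
    Tendsto (fun x => x * w x) atTop atTop := by
  rw [tendsto_atTop]
  intro b
  have hev := (hM (-b)).eventually_lt_const (lt_add_one _)
  have h1 : (0:ℝ) < G 0 / (Real.exp (- -b) + 1) := div_pos (hpos 0) (by positivity)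
  filter_upwards [hev, h0.eventually_lt_const h1, eventually_gt_atTop 0] with x hx hx2 hx0
  by_contra hlt
  push Not at hlt
  have hle : x + -b / w x ≤ 0 := by
    have : x ≤ b / w x := by rw [le_div_iff₀ (hw x)]; exact hlt.le
    rw [neg_div]; linarith
  have h3 := hG hle
  rw [div_lt_iff₀ (hpos x)] at hx
  rw [lt_div_iff₀ (by positivity)] at hx2
  linarith

/-- One-sided self-neglecting property. -/
lemma rv_self (G w : ℝ → ℝ) (hG : Antitone G) (hpos : ∀ x, 0 < G x) (hw : ∀ x, 0 < w x)
    (hM : ∀ t : ℝ, Tendsto (fun x => G (x + t / w x) / G x) atTop (𝓝 (Real.exp (-t))))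
    (q : ℝ) (hq : 1 < q) :
    ∀ᶠ x in atTop, 1 / w (x + 1 / w x) ≤ q * (1 / w x) := by
  have hz : Tendsto (fun x => x + 1 / w x) atTop atTop :=
    tendsto_atTop_mono (fun x => by have := one_div_pos.2 (hw x); simp only [id]; linarith) tendsto_id
  have hA := ((hM 1).comp hz).mul (hM 1)
  have hB := hM (1 + q)
  have hlt : Real.exp (-(1 + q)) < Real.exp (-1) * Real.exp (-1) := by
    rw [← Real.exp_add]
    exact Real.exp_lt_exp.2 (by linarith)
  filter_upwards [hB.eventually_lt hA hlt] with x hx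
  by_contra hcon
  push Not at hcon
  simp only [Function.comp] at hx
  rw [div_mul_div_cancel₀ (hpos _).ne', div_lt_div_iff_of_pos_right (hpos x)] at hx
  refine absurd hx (not_lt.2 (hG ?_))
  have : (1 + q) / w x = 1 / w x + q * (1 / w x) := by ring
  linarith

/-- if `H` has upper endpoint `∞` and `H ∈ MDA(Λ, w)`, then for every
`μ ≥ 0` and `c > 1`, `(x w(x))^μ H̄(cx)/H̄(x) → 0` as `x → ∞`. -/
theorem rapid_variation_rate (H : ℝ → ℝ) (hmono : Monotone H)
    (hbot : Tendsto H atBot (𝓝 0)) (htop : Tendsto H atTop (𝓝 1))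
    (hrH : ∀ x, H x < 1)
    (w : ℝ → ℝ) (hw : ∀ x, 0 < w x) (hwm : Measurable w)
    (hMDA : ∀ t : ℝ, Tendsto (fun x => (1 - H (x + t / w x)) / (1 - H x))
      atTop (𝓝 (Real.exp (-t))))
    (μ : ℝ) (hμ : 0 ≤ μ) (c : ℝ) (hc : 1 < c) :
    Tendsto (fun x => (x * w x) ^ μ * ((1 - H (c * x)) / (1 - H x)))
      atTop (𝓝 0) := by
  set G : ℝ → ℝ := fun x => 1 - H x with hGdef
  have hG : Antitone G := fun x y h => sub_le_sub_left (hmono h) 1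
  have hpos : ∀ x, 0 < G x := fun x => sub_pos.2 (hrH x)
  have h0 : Tendsto G atTop (𝓝 0) := by simpa using htop.const_sub 1
  have hM : ∀ t : ℝ, Tendsto (fun x => G (x + t / w x) / G x) atTop (𝓝 (Real.exp (-t))) := hMDA
  change Tendsto (fun x => (x * w x) ^ μ * (G (c * x) / G x)) atTop (𝓝 0)
  have hxw := rv_xw G w hG hpos hw h0 hM
  set q : ℝ := 2 ^ (1 / (μ + 1)) with hqdef
  have hq : 1 < q := Real.one_lt_rpow (by norm_num) (by positivity)
  have hqp : q ^ (μ + 1) = 2 := by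
    rw [hqdef, ← Real.rpow_mul (by norm_num), one_div_mul_cancel (by positivity), Real.rpow_one]
  have hhalf : ∀ᶠ x in atTop, G (x + 1 / w x) ≤ G x / 2 := by
    have : Real.exp (-1) < 1 / 2 := by
      have := Real.exp_neg_one_lt_d9
      linarith
    filter_upwards [(hM 1).eventually_lt_const this] with x hx
    rw [div_lt_iff₀ (hpos x)] at hx
    linarith
  obtain ⟨X, hX⟩ := eventually_atTop.1 (hhalf.and (rv_self G w hG hpos hw hM q hq))
  have hit := rv_iter G w hG hw q X hq (fun x hx => (hX x hx).1) (fun x hx => (hX x hx).2)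
  set K : ℝ := (c - 1) * (q - 1) with hK
  have hK0 : 0 < K := mul_pos (by linarith) (by linarith)
  have hlim : Tendsto (fun x => 2 * (K ^ (μ + 1))⁻¹ * (x * w x)⁻¹) atTop (𝓝 0) := by
    simpa using (tendsto_inv_atTop_zero.comp hxw).const_mul (2 * (K ^ (μ + 1))⁻¹)
  refine squeeze_zero' ?_ ?_ hlim
  · filter_upwards [eventually_gt_atTop 0] with x hx
    have := hw x
    have := hpos x
    have := hpos (c * x)
    positivity
  · filter_upwards [eventually_gt_atTop 0, eventually_ge_atTop X,
      (hxw.const_mul_atTop hK0).eventually_ge_atTop 1] with x hx hxX hu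
    have hwx := hw x
    obtain ⟨n, hn1, hn2⟩ := exists_nat_pow_near hu hq
    have hp : 0 < x * w x := by positivity
    have hq1 : 0 < q - 1 := by linarith
    have hq0 : 0 < q := by linarith
    have hle : x + 1 / w x * ((q ^ n - 1) / (q - 1)) ≤ c * x := by
      have : 1 / w x * ((q ^ n - 1) / (q - 1)) ≤ (c - 1) * x := by
        rw [div_mul_div_comm, div_le_iff₀ (by positivity)]
        rw [hK] at hn1
        nlinarith
      linarith
    have hb : G (c * x) / G x ≤ 1 / 2 ^ n := by
      rw [div_le_iff₀ (hpos x)]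
      have h6 := (hG hle).trans (hit n x hxX)
      rwa [one_div_mul_eq_div]
    have hpow : (K * (x * w x)) ^ (μ + 1) ≤ 2 * 2 ^ n := by
      calc (K * (x * w x)) ^ (μ + 1) ≤ (q ^ (n + 1)) ^ (μ + 1) :=
            Real.rpow_le_rpow (by positivity) hn2.le (by positivity)
        _ = (q ^ (μ + 1)) ^ (n + 1) := by
            rw [← Real.rpow_natCast, ← Real.rpow_mul hq0.le, mul_comm, Real.rpow_mul hq0.le,
              Real.rpow_natCast]
        _ = 2 * 2 ^ n := by rw [hqp, pow_succ, mul_comm]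
    rw [Real.mul_rpow hK0.le hp.le, Real.rpow_add_one hp.ne'] at hpow
    have hKp : 0 < K ^ (μ + 1) := by positivity
    calc (x * w x) ^ μ * (G (c * x) / G x) ≤ (x * w x) ^ μ * (1 / 2 ^ n) := by gcongr
      _ ≤ 2 * (K ^ (μ + 1))⁻¹ * (x * w x)⁻¹ := by
        rw [← div_eq_mul_inv, ← div_eq_mul_inv, div_div, mul_one_div,
          div_le_div_iff₀ (by positivity) (by positivity)]
        linarith
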